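/- For every positive integer n, the sharpened upper bound θ(n) < (3/2)·2^{-p_{n+1}} holds. -/

import Mathlib

/-!
Expanding `1 / (2 ^ d - 1) = ∑_{k ≥ 1} 2 ^ (-d k)` and exchanging sums turns
`∑_{d ∣ P} μ(d) / (2 ^ d - 1)` into `∑ 2 ^ (-m)` over the `m ≥ 1` coprime to `P`
(`hasSum_coprime`).  For `P = p_n#` the term `m = 1` cancels the `-1/2` of `theta n`, and every
other such `m` is at least `q = p_{n+1}` and, since `2 ∣ P`, has the same parity as `q`.  Hence
`theta n ≤ ∑_{k ≥ 0} 2 ^ (-(q + 2 k)) = (4/3) * 2 ^ (-q)`.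
-/


open scoped BigOperators

/-- `nthPrime k` is the k-th prime with 1-based indexing: p₁ = 2, p₂ = 3, ... -/
noncomputable def nthPrime (k : ℕ) : ℕ := Nat.nth Nat.Prime (k - 1)

/-- `primorialN n` is `p_n# = p₁ ⬝ p₂ ⋯ p_n`, the product of the first `n` primes. -/
noncomputable def primorialN (n : ℕ) : ℕ := ∏ i ∈ Finset.range n, Nat.nth Nat.Prime i

/-- `theta n = -1/2 + ∑_{d ∣ p_n#} μ(d)/(2^d - 1)`. -/
noncomputable def theta (n : ℕ) : ℝ :=
  -1/2 + ∑ d ∈ (primorialN n).divisors,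
    ((ArithmeticFunction.moebius d : ℤ) : ℝ) / (2 ^ d - 1)

lemma hasSum_of_eq {f g : ℕ → ℝ} {a b : ℝ} (h : HasSum f a) (hf : g = f) (hb : b = a) :
    HasSum g b := by
  rw [hf, hb]
  exact h

/-- The geometric series for `1 / (2 ^ d - 1)`, indexed by the positive multiples of `d`. -/
lemma hasSum_multiples (d : ℕ) (hd : 0 < d) :
    HasSum (fun m : ℕ => if m ≠ 0 ∧ d ∣ m then (1 / 2 : ℝ) ^ m else 0) (1 / (2 ^ d - 1)) := by
  have hinj : Function.Injective (fun k : ℕ => d * (k + 1)) := by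
    intro a b h
    have := Nat.eq_of_mul_eq_mul_left hd h
    omega
  rw [← hinj.hasSum_iff]
  · have h2 : (1 : ℝ) < 2 ^ d := one_lt_pow₀ (by norm_num) hd.ne'
    have hr : (1 / 2 : ℝ) ^ d < 1 := pow_lt_one₀ (by norm_num) (by norm_num) hd.ne'
    have h := (hasSum_geometric_of_lt_one (by positivity) hr).mul_left ((1 / 2 : ℝ) ^ d)
    refine hasSum_of_eq h (funext fun k => ?_) ?_
    · have : d * (k + 1) ≠ 0 := by positivity
      simp only [Function.comp]
      rw [if_pos ⟨this, dvd_mul_right _ _⟩, pow_mul, pow_succ, mul_comm]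
    · rw [one_div_pow]
      have h3 : (2 : ℝ) ^ d - 1 ≠ 0 := by linarith
      field_simp
  · intro m hm
    rw [if_neg]
    rintro ⟨h0, c, rfl⟩
    refine hm ⟨c - 1, ?_⟩
    have : c ≠ 0 := by rintro rfl; simp at h0
    have : c - 1 + 1 = c := by omega
    simp [this]

/-- The Möbius function detects coprimality to `P`. -/
lemma sum_moebius_dvd (P m : ℕ) (hP : P ≠ 0) :
    ∑ d ∈ P.divisors, (if d ∣ m then ((ArithmeticFunction.moebius d : ℤ) : ℝ) else 0)
      = if m.Coprime P then 1 else 0 := by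
  have hg : P.divisors.filter (· ∣ m) = (m.gcd P).divisors := by
    ext d
    simp [Nat.dvd_gcd_iff, hP, and_comm]
  rw [← Finset.sum_filter, hg]
  have h := congrArg (fun f : ArithmeticFunction ℤ => f (m.gcd P))
    ArithmeticFunction.coe_zeta_mul_moebius
  simp only [ArithmeticFunction.coe_zeta_mul_apply, ArithmeticFunction.one_apply] at h
  rw [← Int.cast_sum, h]
  simp [Nat.coprime_iff_gcd_eq_one]

lemma hasSum_coprime (P : ℕ) (hP : P ≠ 0) :
    HasSum (fun m : ℕ => if m ≠ 0 ∧ m.Coprime P then (1 / 2 : ℝ) ^ m else 0)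
      (∑ d ∈ P.divisors, ((ArithmeticFunction.moebius d : ℤ) : ℝ) / (2 ^ d - 1)) := by
  have h := hasSum_sum (s := P.divisors) fun d hd =>
    (hasSum_multiples d (Nat.pos_of_mem_divisors hd)).mul_left
      ((ArithmeticFunction.moebius d : ℤ) : ℝ)
  refine hasSum_of_eq h (funext fun m => ?_) ?_
  · have h1 := congrArg (· * (if m ≠ 0 then (1 / 2 : ℝ) ^ m else 0)) (sum_moebius_dvd P m hP)
    simp only [Finset.sum_mul] at h1
    rw [Finset.sum_congr rfl (g := fun d =>
      (if d ∣ m then ((ArithmeticFunction.moebius d : ℤ) : ℝ) else 0)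
        * (if m ≠ 0 then (1 / 2 : ℝ) ^ m else 0)), h1]
    · by_cases h0 : m = 0 <;> by_cases hc : m.Coprime P <;> simp [h0, hc]
    · intro d _
      by_cases h0 : m = 0 <;> by_cases hc : d ∣ m <;> simp [h0, hc]
  · simp [div_eq_mul_inv]

lemma dvd_primorialN {n p : ℕ} (hp : p.Prime) (h : p < Nat.nth Nat.Prime n) :
    p ∣ primorialN n := by
  rw [← Nat.nth_count hp] at h ⊢
  exact Finset.dvd_prod_of_mem _
    (Finset.mem_range.2 ((Nat.nth_lt_nth Nat.infinite_setOfPred_prime).1 h))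

/-- Apart from `1`, every positive integer coprime to `p_n#` is of the form `p_{n+1} + 2 k`. -/
lemma eq_add_of_coprime {n m : ℕ} (hn : 0 < n) (h0 : m ≠ 0) (h1 : m ≠ 1)
    (hc : m.Coprime (primorialN n)) : ∃ k, Nat.nth Nat.Prime n + 2 * k = m := by
  have hq : (Nat.nth Nat.Prime n).Prime := Nat.prime_nth_prime n
  have h2q : 2 < Nat.nth Nat.Prime n := by
    have := (Nat.nth_lt_nth Nat.infinite_setOfPred_prime).2 hn
    rwa [Nat.nth_prime_zero_eq_two] at this
  have hnd : ∀ p : ℕ, p.Prime → p ∣ m → Nat.nth Nat.Prime n ≤ p := by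
    intro p hp hpm
    by_contra! hlt
    exact Nat.not_coprime_of_dvd_of_dvd hp.one_lt hpm (dvd_primorialN hp hlt) hc
  have hle : Nat.nth Nat.Prime n ≤ m :=
    (hnd _ (Nat.minFac_prime h1) (Nat.minFac_dvd m)).trans
      (Nat.minFac_le (Nat.pos_of_ne_zero h0))
  have hodd : ¬ 2 ∣ m := fun h => absurd (hnd 2 Nat.prime_two h) (by omega)
  have hqodd := hq.eq_two_or_odd
  exact ⟨(m - Nat.nth Nat.Prime n) / 2, by omega⟩

/-- For every positive integer `n`, `θ(n) < (3/2) ⬝ 2^(-p_{n+1})`. -/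
theorem theta_sharp_upper_bound (n : ℕ) (hn : 0 < n) :
    theta n < (3 / 2) * (2 : ℝ) ^ (-(nthPrime (n + 1) : ℤ)) := by
  have hP : primorialN n ≠ 0 :=
    Finset.prod_ne_zero_iff.2 fun i _ => (Nat.prime_nth_prime i).ne_zero
  have hq : nthPrime (n + 1) = Nat.nth Nat.Prime n := rfl
  rw [hq]
  set q := Nat.nth Nat.Prime n with hqdef
  have hinj : Function.Injective (fun k : ℕ => q + 2 * k) := fun a b h => by
    simp only at h
    omega
  have hgeo : HasSum (fun k : ℕ => (1 / 2 : ℝ) ^ (q + 2 * k)) ((1 / 2) ^ q * (4 / 3)) := by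
    have h := (hasSum_geometric_of_lt_one (r := (1 / 4 : ℝ)) (by norm_num)
      (by norm_num)).mul_left ((1 / 2 : ℝ) ^ q)
    refine hasSum_of_eq h (funext fun k => ?_) ?_
    · rw [pow_add, pow_mul]
      norm_num
    · norm_num
  have htail : HasSum
      (Set.indicator (Set.range fun k : ℕ => q + 2 * k) fun m => (1 / 2 : ℝ) ^ m)
      ((1 / 2) ^ q * (4 / 3)) := by
    rw [← hinj.hasSum_iff]
    · refine hasSum_of_eq hgeo (funext fun k => ?_) rfl
      simp
    · intro m hm
      exact Set.indicator_of_notMem hm _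
  have hmaj := (hasSum_ite_eq (1 : ℕ) (1 / 2 : ℝ)).add htail
  have hle := hasSum_le (fun m => ?_) (hasSum_coprime _ hP) hmaj
  · have hpos : (0 : ℝ) < (1 / 2) ^ q := by positivity
    have hz : (2 : ℝ) ^ (-(q : ℤ)) = (1 / 2) ^ q := by simp
    rw [hz, theta]
    linarith
  · have hnn : 0 ≤ Set.indicator (Set.range fun k : ℕ => q + 2 * k)
        (fun m => (1 / 2 : ℝ) ^ m) m := Set.indicator_nonneg (fun _ _ => by positivity) _
    by_cases h1 : m = 1
    · subst h1
      simpa using hnn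
    by_cases hc : m ≠ 0 ∧ m.Coprime (primorialN n)
    · rw [if_pos hc, if_neg h1, zero_add, Set.indicator_of_mem]
      exact eq_add_of_coprime hn hc.1 h1 hc.2
    · rw [if_neg hc, if_neg h1, zero_add]
      exact hnn
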